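/- Let f : ℝ^m → ℝ be continuously differentiable and suppose (w*, λ*, μ*) satisfies the first-order KKT conditions of the simplex-constrained problem min_{w ∈ Δ^{m-1}} f(w): ∇f(w*) + λ*𝟏 − μ* = 0, Σᵢ wᵢ* = 1, wᵢ* ≥ 0, μᵢ* ≥ 0, and μᵢ* wᵢ* = 0 for all i. Then the point z* defined by zᵢ* = √(wᵢ*) satisfies ‖z*‖₂ = 1 and the first-order stationarity condition of the sphere-constrained problem min_{‖z‖₂=1} f(z ⊙ z) with Lagrange multiplier γ* = λ*, namely 2 diag(z*) ∇f(z* ⊙ z*) + 2γ* z* = 0. -/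

import Mathlib

/-- The componentwise squaring map `z ↦ z ⊙ z`. -/
noncomputable def hadamardSq {m : ℕ} (z : EuclideanSpace ℝ (Fin m)) :
    EuclideanSpace ℝ (Fin m) :=
  WithLp.toLp 2 (fun i => z i * z i)

theorem two_mul_mul_add_eq_zero_of_complementary {R : Type*} [CommRing R] [IsReduced R]
    {g lam mu z : R} (hstat : g + lam - mu = 0) (hcomp : mu * (z * z) = 0) :
    2 * z * g + 2 * lam * z = 0 := by
  have hsq : (mu * z) ^ 2 = 0 := by linear_combination mu * hcomp
  have hmuz : mu * z = 0 := (pow_eq_zero_iff two_ne_zero).mp hsq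
  linear_combination 2 * z * hstat + 2 * hmuz

section hadamardSq

variable {m : ℕ} {z w : EuclideanSpace ℝ (Fin m)}

theorem hadamardSq_apply (z : EuclideanSpace ℝ (Fin m)) (i : Fin m) :
    hadamardSq z i = z i * z i :=
  rfl

theorem sum_hadamardSq (z : EuclideanSpace ℝ (Fin m)) : ∑ i, hadamardSq z i = ‖z‖ ^ 2 := by
  simp only [EuclideanSpace.real_norm_sq_eq, hadamardSq_apply, pow_two (z _)]

theorem hadamardSq_eq_of_eq_sqrt (hw : ∀ i, 0 ≤ w i) (hz : ∀ i, z i = √(w i)) :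
    hadamardSq z = w := by
  ext i
  rw [hadamardSq_apply, hz, Real.mul_self_sqrt (hw i)]

theorem sum_hadamardSq_eq_one_iff : ∑ i, hadamardSq z i = 1 ↔ ‖z‖ = 1 := by
  rw [sum_hadamardSq, pow_eq_one_iff_of_nonneg (norm_nonneg z) two_ne_zero]

end hadamardSq

theorem simplex_kkt_to_sphere_stationarity_general {m : ℕ}
    {f : EuclideanSpace ℝ (Fin m) → ℝ} {z g mu : EuclideanSpace ℝ (Fin m)} {lam : ℝ}
    (hf : HasGradientAt f g (hadamardSq z)) (hstat : ∀ i, g i + lam - mu i = 0)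
    (hsum : ∑ i, hadamardSq z i = 1) (hcomp : ∀ i, mu i * hadamardSq z i = 0) :
    ‖z‖ = 1 ∧ ∀ i, 2 * z i * gradient f (hadamardSq z) i + 2 * lam * z i = 0 := by
  refine ⟨sum_hadamardSq_eq_one_iff.mp hsum, fun i ↦ ?_⟩
  rw [hf.gradient]
  exact two_mul_mul_add_eq_zero_of_complementary (hstat i) (hcomp i)

/-- If `(w*, λ*, μ*)` satisfies the first-order KKT conditions of the
simplex-constrained problem `min_{w ∈ Δ} f(w)`, then `z*` with `zᵢ* = √(wᵢ*)`
lies on the unit sphere and satisfies the first-order stationarity condition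
`2 diag(z*) ∇f(z* ⊙ z*) + 2γ* z* = 0` of the sphere problem with `γ* = λ*`. -/
theorem simplex_kkt_to_sphere_stationarity (m : ℕ)
    (f : EuclideanSpace ℝ (Fin m) → ℝ) (hf : ContDiff ℝ 1 f)
    (w : EuclideanSpace ℝ (Fin m)) (lam : ℝ) (mu : EuclideanSpace ℝ (Fin m))
    (hstat : ∀ i, gradient f w i + lam - mu i = 0)
    (hsum : ∑ i, w i = 1) (hnn : ∀ i, 0 ≤ w i)
    (hmu : ∀ i, 0 ≤ mu i) (hcomp : ∀ i, mu i * w i = 0)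
    (z : EuclideanSpace ℝ (Fin m)) (hz : ∀ i, z i = Real.sqrt (w i)) :
    ‖z‖ = 1 ∧
    ∀ i, 2 * z i * gradient f (hadamardSq z) i + 2 * lam * z i = 0 := by
  obtain rfl : hadamardSq z = w := hadamardSq_eq_of_eq_sqrt hnn hz
  exact simplex_kkt_to_sphere_stationarity_general
    (hf.differentiable one_ne_zero _).hasGradientAt hstat hsum hcomp
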